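/- Sequencing preserves the discrete-structure property of trace measures: let μ be a finite measure on 𝕋 that is discrete-structured, and let κ be a Markov kernel from 𝕋 to 𝕋 such that κ(u) is discrete-structured for every trace u. Define the measure β on 𝕋 by β(A) := ∫_𝕋 ∫_𝕋 1[u₁ and u₂ are disjoint] · 1_A(u₁ ++ u₂) dκ(u₁)(u₂) dμ(u₁). Then β is discrete-structured. -/

import Mathlib

open MeasureTheory
open scoped ENNReal NNReal

/-- The value space: reals together with Booleans. -/
abbrev V : Type := ℝ ⊕ Bool

/-- The base measure on values. -/
noncomputable def ν : Measure V :=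
  Measure.map Sum.inl (volume : Measure ℝ) + Measure.map Sum.inr (Measure.count : Measure Bool)

/-- The space of traces. -/
abbrev 𝕋 : Type := Σ s : Finset String, (↑s → V)

/-- Concatenation of traces (on overlapping names the first trace takes precedence;
for disjoint shapes this is the usual concatenation). -/
def tcat (u₁ u₂ : 𝕋) : 𝕋 :=
  ⟨u₁.1 ∪ u₂.1, fun k =>
    if h : k.1 ∈ u₁.1 then u₁.2 ⟨k.1, h⟩
    else u₂.2 ⟨k.1, (Finset.mem_union.mp k.2).resolve_left h⟩⟩

/-- A measure on traces is discrete-structured if almost every pair of traces is either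
equal, or disagrees at some name present in the shape of both. -/
def DiscreteStructured (μ : Measure 𝕋) : Prop :=
  ∀ᵐ p ∂(μ.prod μ),
    p.1 = p.2 ∨ ∃ (k : String) (h₁ : k ∈ p.1.1) (h₂ : k ∈ p.2.1),
      p.1.2 ⟨k, h₁⟩ ≠ p.2.2 ⟨k, h₂⟩

/-!
Equality and conflict of traces are measurable relations, so by Fubini discrete structure can be
checked one coordinate at a time. Draw two traces `u ++ u'` and `v ++ v'` from the sequenced
measure, with `u, v` from `μ`, `u'` from `κ u` and `v'` from `κ v`. If `u` and `v` conflict at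
some name, so do the concatenations. Otherwise, almost surely, `u = v`, so `u'` and `v'` come from
the same measure `κ u` and are equal or in conflict themselves; a conflict between them survives
because its name lies outside the shape of `u`.
-/

open ProbabilityTheory

section MeasurableSpace

variable {α β γ ι ι' : Type*}

section Sum

variable [MeasurableSpace α] [MeasurableSpace β]

theorem measurableEmbedding_inl : MeasurableEmbedding (Sum.inl : α → α ⊕ β) :=
  ⟨Sum.inl_injective, measurable_inl, fun _ ht => ht.inl_image⟩

theorem measurableEmbedding_inr : MeasurableEmbedding (Sum.inr : β → α ⊕ β) :=
  ⟨Sum.inr_injective, measurable_inr, fun _ ht => ht.inr_image⟩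

instance [MeasurableEq α] [MeasurableEq β] : MeasurableEq (α ⊕ β) where
  measurableSet_diagonal := by
    have diagonal_eq : Set.diagonal (α ⊕ β) =
        Prod.map .inl .inl '' Set.diagonal α ∪ Prod.map .inr .inr '' Set.diagonal β := by
      ext ⟨x | x, y | y⟩ <;> simp
    rw [diagonal_eq]
    exact ((measurableEmbedding_inl.prodMap measurableEmbedding_inl).measurableSet_image'
        measurableSet_diagonal).union
      ((measurableEmbedding_inr.prodMap measurableEmbedding_inr).measurableSet_image'
        measurableSet_diagonal)

end Sum

section PiSigma

variable {X : ι → Type*} [∀ i, MeasurableSpace (X i)]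

instance [Countable ι] [∀ i, MeasurableEq (X i)] : MeasurableEq (∀ i, X i) where
  measurableSet_diagonal := by
    have diagonal_eq : Set.diagonal (∀ i, X i) = ⋂ i, {p | p.1 i = p.2 i} := by
      ext p
      simp [funext_iff]
    rw [diagonal_eq]
    exact .iInter fun i => measurableSet_eq_fun (by fun_prop) (by fun_prop)

theorem measurableSet_sigma_iff {t : Set (Σ i, X i)} :
    MeasurableSet t ↔ ∀ i, MeasurableSet (Sigma.mk i ⁻¹' t) :=
  MeasurableSpace.measurableSet_iInf

theorem measurableEmbedding_sigmaMk (i : ι) :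
    MeasurableEmbedding (Sigma.mk i : X i → Σ i, X i) where
  injective := sigma_mk_injective
  measurable _ ht := measurableSet_sigma_iff.1 ht i
  measurableSet_image' t ht := by
    refine measurableSet_sigma_iff.2 fun j => ?_
    obtain rfl | hij := eq_or_ne i j
    · rwa [Set.preimage_image_eq _ sigma_mk_injective]
    · rw [Set.preimage_image_sigmaMk_of_ne hij.symm]
      exact .empty

section SigmaProdSigma

variable [Countable ι] [Countable ι'] {Y : ι' → Type*} [∀ j, MeasurableSpace (Y j)]

theorem measurableSet_sigma_prod_sigma {t : Set ((Σ i, X i) × Σ j, Y j)}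
    (ht : ∀ i j, MeasurableSet (Prod.map (Sigma.mk i) (Sigma.mk j) ⁻¹' t)) : MeasurableSet t := by
  have t_eq : t = ⋃ (i) (j), Prod.map (Sigma.mk i) (Sigma.mk j) ''
      (Prod.map (Sigma.mk i) (Sigma.mk j) ⁻¹' t) := by
    ext ⟨⟨i, x⟩, ⟨j, y⟩⟩
    simp only [Set.mem_iUnion]
    exact ⟨fun h => ⟨i, j, (x, y), h, rfl⟩, fun ⟨_, _, _, h, hxy⟩ => hxy ▸ h⟩
  rw [t_eq]
  exact .iUnion fun i => .iUnion fun j => ((measurableEmbedding_sigmaMk i).prodMap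
    (measurableEmbedding_sigmaMk j)).measurableSet_image' (ht i j)

theorem measurable_from_sigma_prod_sigma [MeasurableSpace γ] {f : (Σ i, X i) × (Σ j, Y j) → γ}
    (hf : ∀ i j, Measurable fun p : X i × Y j => f (⟨i, p.1⟩, ⟨j, p.2⟩)) : Measurable f :=
  fun _ ht => measurableSet_sigma_prod_sigma fun i j => hf i j ht

end SigmaProdSigma

instance [Countable ι] [∀ i, MeasurableEq (X i)] : MeasurableEq (Σ i, X i) where
  measurableSet_diagonal := measurableSet_sigma_prod_sigma fun i j => by
    obtain rfl | hij := eq_or_ne i j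
    · convert measurableSet_diagonal (α := X i) using 1
      ext ⟨x, y⟩
      simp
    · convert MeasurableSet.empty using 1
      ext ⟨x, y⟩
      simp [hij]

end PiSigma

instance : Countable Char :=
  Function.Injective.countable (f := Char.toNat) fun _ _ h => Char.ext (UInt32.toNat_inj.1 h)

instance : Countable String :=
  Function.Injective.countable (f := String.toList) fun _ _ h => String.toList_inj.1 h

end MeasurableSpace

section AlmostEverywhere

variable {α β γ : Type*} [MeasurableSpace α] [MeasurableSpace β] [MeasurableSpace γ]

theorem measurableSet_setOfPred_ae {r : α → β → Prop} (hr : MeasurableSet {p : α × β | r p.1 p.2})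
    (ρ : Measure β) [SFinite ρ] : MeasurableSet {a | ∀ᵐ b ∂ρ, r a b} :=
  measurable_measure_prodMk_left hr.compl (measurableSet_singleton 0)

theorem ae_map_restrict_compProd_iff {μ : Measure α} [SFinite μ] {κ : Kernel α β}
    [IsSFiniteKernel κ] {D : Set (α × β)} (hD : MeasurableSet D) {f : α × β → γ}
    (hf : Measurable f) {p : γ → Prop} (hp : MeasurableSet {c | p c}) :
    (∀ᵐ c ∂((μ ⊗ₘ κ).restrict D).map f, p c) ↔
      ∀ᵐ a ∂μ, ∀ᵐ b ∂κ a, (a, b) ∈ D → p (f (a, b)) := by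
  rw [ae_map_iff hf.aemeasurable hp, ae_restrict_iff' hD]
  exact Measure.ae_compProd_iff (hD.imp (hf hp))

end AlmostEverywhere

/-- Traces: finite partial functions from names in `ι` to values in `E`. The space `𝕋` is the case
of string names and values in `V`. -/
abbrev Trace (ι E : Type*) : Type _ := Σ s : Finset ι, (↑s → E)

namespace Trace

variable {ι E : Type*}

/-- Two traces conflict if they take different values at a common name, that is, if they are
incompatible as partial functions. -/
def Conflict (u v : Trace ι E) : Prop :=
  ∃ (k : ι) (hu : k ∈ u.1) (hv : k ∈ v.1), u.2 ⟨k, hu⟩ ≠ v.2 ⟨k, hv⟩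

/-- Discrete-structured measures on traces, for arbitrary names and values; `DiscreteStructured` is
the case of traces in `𝕋`. -/
def IsDiscreteStructured [MeasurableSpace E] (μ : Measure (Trace ι E)) : Prop :=
  ∀ᵐ p ∂μ.prod μ, p.1 = p.2 ∨ Conflict p.1 p.2

section Append

variable [DecidableEq ι]

/-- Concatenation of traces, for arbitrary names and values; as in `tcat`, the first trace takes
precedence on common names. -/
def append (u v : Trace ι E) : Trace ι E :=
  ⟨u.1 ∪ v.1, fun k =>
    if h : k.1 ∈ u.1 then u.2 ⟨k.1, h⟩
    else v.2 ⟨k.1, (Finset.mem_union.mp k.2).resolve_left h⟩⟩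

theorem Conflict.append_left {u v : Trace ι E} (h : Conflict u v) (u' v' : Trace ι E) :
    Conflict (append u u') (append v v') := by
  obtain ⟨k, hu, hv, hne⟩ := h
  exact ⟨k, Finset.mem_union_left _ hu, Finset.mem_union_left _ hv, by
    simpa [append, hu, hv] using hne⟩

theorem Conflict.append_right {u v u' v' : Trace ι E} (h : Conflict u' v')
    (hu : Disjoint u.1 u'.1) (hv : Disjoint v.1 v'.1) :
    Conflict (append u u') (append v v') := by
  obtain ⟨k, hu', hv', hne⟩ := h
  have hku : k ∉ u.1 := Finset.disjoint_right.1 hu hu'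
  have hkv : k ∉ v.1 := Finset.disjoint_right.1 hv hv'
  exact ⟨k, Finset.mem_union_right _ hu', Finset.mem_union_right _ hv', by
    simpa [append, hku, hkv] using hne⟩

end Append

variable [Countable ι] [MeasurableSpace E]

theorem measurableSet_shape_prod (r : Finset ι → Finset ι → Prop) :
    MeasurableSet {p : Trace ι E × Trace ι E | r p.1.1 p.2.1} :=
  measurableSet_sigma_prod_sigma fun s t => .const (r s t)

theorem measurableSet_conflict [MeasurableEq E] :
    MeasurableSet {p : Trace ι E × Trace ι E | Conflict p.1 p.2} :=
  measurableSet_sigma_prod_sigma fun s t => measurableSet_setOfPred.2 <|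
    .exists fun k => .exists fun hs => .exists fun ht =>
      (Measurable.eq (f := fun p : (↑s → E) × (↑t → E) => p.1 ⟨k, hs⟩) (g := fun p => p.2 ⟨k, ht⟩)
        (by fun_prop) (by fun_prop)).not

theorem measurableSet_eq_or_conflict [MeasurableEq E] :
    MeasurableSet {p : Trace ι E × Trace ι E | p.1 = p.2 ∨ Conflict p.1 p.2} :=
  measurableSet_diagonal.union measurableSet_conflict

theorem isDiscreteStructured_iff_ae_ae [MeasurableEq E] {μ : Measure (Trace ι E)} [SFinite μ] :
    IsDiscreteStructured μ ↔ ∀ᵐ u ∂μ, ∀ᵐ v ∂μ, u = v ∨ Conflict u v :=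
  Measure.ae_prod_iff_ae_ae measurableSet_eq_or_conflict

variable [DecidableEq ι]

theorem measurable_append : Measurable fun p : Trace ι E × Trace ι E => append p.1 p.2 := by
  refine measurable_from_sigma_prod_sigma fun s t =>
    (measurableEmbedding_sigmaMk (s ∪ t)).measurable.comp (measurable_pi_lambda _ fun k => ?_)
  change Measurable fun p : (↑s → E) × (↑t → E) => if h : k.1 ∈ s then p.1 ⟨k.1, h⟩
    else p.2 ⟨k.1, (Finset.mem_union.1 k.2).resolve_left h⟩
  split_ifs <;> fun_prop

/-- Sequencing of a trace measure with a trace kernel: draw `u` from `μ` and then `v` from `κ u`,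
discard the pair if the shapes overlap, and concatenate. The composition-product `μ ⊗ₘ κ` is zero by
convention unless `μ` and `κ` are s-finite. -/
noncomputable def seq (μ : Measure (Trace ι E)) (κ : Kernel (Trace ι E) (Trace ι E)) :
    Measure (Trace ι E) :=
  ((μ ⊗ₘ κ).restrict {p | Disjoint p.1.1 p.2.1}).map fun p => append p.1 p.2

variable (μ : Measure (Trace ι E)) [SFinite μ]
  (κ : Kernel (Trace ι E) (Trace ι E)) [IsSFiniteKernel κ]

theorem seq_apply {A : Set (Trace ι E)} (hA : MeasurableSet A) :
    seq μ κ A = ∫⁻ u, ∫⁻ v,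
      (if Disjoint u.1 v.1 then A.indicator (fun _ => (1 : ℝ≥0∞)) (append u v) else 0) ∂κ u ∂μ := by
  have hD := measurableSet_shape_prod (E := E) (ι := ι) Disjoint
  have hpre := measurable_append hA
  rw [seq, Measure.map_apply measurable_append hA, Measure.restrict_apply hpre,
    ← lintegral_indicator_one (hpre.inter hD),
    Measure.lintegral_compProd (measurable_one.indicator (hpre.inter hD))]
  refine lintegral_congr fun u => lintegral_congr fun v => ?_
  by_cases hdisj : Disjoint u.1 v.1 <;> by_cases hmem : append u v ∈ A <;>
    simp [Set.indicator, hdisj, hmem]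

instance : SFinite (seq μ κ) := by
  unfold seq
  infer_instance

variable {μ κ}

theorem ae_seq_iff {p : Trace ι E → Prop} (hp : MeasurableSet {u | p u}) :
    (∀ᵐ u ∂seq μ κ, p u) ↔ ∀ᵐ u ∂μ, ∀ᵐ v ∂κ u, Disjoint u.1 v.1 → p (append u v) :=
  ae_map_restrict_compProd_iff (measurableSet_shape_prod Disjoint) measurable_append hp

theorem ae_ae_seq_iff {r : Trace ι E → Trace ι E → Prop}
    (hr : MeasurableSet {p : Trace ι E × Trace ι E | r p.1 p.2}) :
    (∀ᵐ x ∂seq μ κ, ∀ᵐ y ∂seq μ κ, r x y) ↔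
      ∀ᵐ u ∂μ, ∀ᵐ u' ∂κ u, Disjoint u.1 u'.1 →
        ∀ᵐ v ∂μ, ∀ᵐ v' ∂κ v, Disjoint v.1 v'.1 → r (append u u') (append v v') := by
  rw [ae_seq_iff (measurableSet_setOfPred_ae hr _)]
  have ae_right (x : Trace ι E) : (∀ᵐ y ∂seq μ κ, r x y) ↔ _ :=
    ae_seq_iff (measurable_prodMk_left hr)
  simp only [ae_right]

end Trace

open Trace

theorem seq_discreteStructured_general {ι E : Type*} [Countable ι] [DecidableEq ι]
    [MeasurableSpace E] [MeasurableEq E]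
    {μ : Measure (Trace ι E)} [SFinite μ] (hμ : IsDiscreteStructured μ)
    {κ : Kernel (Trace ι E) (Trace ι E)} [IsSFiniteKernel κ]
    (hκ : ∀ᵐ u ∂μ, IsDiscreteStructured (κ u)) :
    IsDiscreteStructured (seq μ κ) := by
  rw [isDiscreteStructured_iff_ae_ae, ae_ae_seq_iff measurableSet_eq_or_conflict]
  filter_upwards [isDiscreteStructured_iff_ae_ae.1 hμ, hκ] with u hu hκu
  filter_upwards [isDiscreteStructured_iff_ae_ae.1 hκu] with u' hu' hdisj
  filter_upwards [hu] with v huv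
  obtain rfl | hconf := huv
  · filter_upwards [hu'] with v' hv' hdisj'
    exact hv'.imp (congrArg (append u)) fun hconf => hconf.append_right hdisj hdisj'
  · exact .of_forall fun _ _ => .inr (hconf.append_left _ _)

/-- Sequencing a finite discrete-structured trace measure `μ` with a Markov kernel `κ`
all of whose values are discrete-structured yields a discrete-structured measure. -/
theorem seq_discreteStructured
    (μ : Measure 𝕋) [IsFiniteMeasure μ] (hμ : DiscreteStructured μ)
    (κ : ProbabilityTheory.Kernel 𝕋 𝕋) [ProbabilityTheory.IsMarkovKernel κ]
    (hκ : ∀ u : 𝕋, DiscreteStructured (κ u))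
    (β : Measure 𝕋)
    (hβ : ∀ A : Set 𝕋, MeasurableSet A →
      β A = ∫⁻ u₁, ∫⁻ u₂,
        (if Disjoint u₁.1 u₂.1 then A.indicator (fun _ => (1 : ℝ≥0∞)) (tcat u₁ u₂) else 0)
          ∂(κ u₁) ∂μ) :
    DiscreteStructured β :=
  have hβ_eq : β = seq μ κ := Measure.ext fun A hA => (hβ A hA).trans (seq_apply μ κ hA).symm
  hβ_eq ▸ seq_discreteStructured_general hμ (.of_forall hκ)
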